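/- arXiv:2108.07751 — 5 statements merged into one kernel-verified Lean document; each statement's English description precedes it below -/
import Mathlib

section
/- Let R₁, …, Rₙ (n ≥ 2) be axis-aligned rectangles in ℝ² whose corner coordinates are all integers, and suppose that whenever i ≠ j and Rᵢ = Rⱼ, the rectangle Rᵢ contains more than one point (i.e., no two of the rectangles are identical single points). Then there exists a selection p₁, …, pₙ with pᵢ ∈ Rᵢ such that for all i ≠ j and every ℓ ∈ {1, 2, ∞}, d_ℓ(pᵢ, pⱼ) ≥ 1/n. -/
open Set

/-- The `L₁` distance on `ℝ²`. -/
noncomputable def d1 (p q : ℝ × ℝ) : ℝ := |p.1 - q.1| + |p.2 - q.2|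

/-- The Euclidean (`L₂`) distance on `ℝ²`. -/
noncomputable def d2 (p q : ℝ × ℝ) : ℝ := Real.sqrt ((p.1 - q.1) ^ 2 + (p.2 - q.2) ^ 2)

/-- The `L∞` distance on `ℝ²`. -/
noncomputable def dinf (p q : ℝ × ℝ) : ℝ := max |p.1 - q.1| |p.2 - q.2|

/-- The axis-aligned rectangle `[a,b] × [c,d]`. -/
def rect (a b c d : ℝ) : Set (ℝ × ℝ) := Set.Icc a b ×ˢ Set.Icc c d

/-!
Scale the plane by an integer `m ≥ n - 1`, `m > 0`. A rectangle with more than one point then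
contains at least `m + 1 ≥ n` integer points, while the one-point rectangles are pairwise distinct.
Hall's condition for choosing distinct integer points from the scaled rectangles is therefore
immediate, and scaling back puts distinct points at `L∞` distance at least `1 / m`.
-/

section DistinctRepresentatives

variable {ι : Type*} [Fintype ι]

lemma exists_injective_mem_of_card_le {α : Type*} {T : ι → Finset α} {r : ι → α}
    (hr : ∀ i, r i ∈ T i)
    (hcard : ∀ i j, i ≠ j → r i = r j →
      Fintype.card ι ≤ (T i).card ∨ Fintype.card ι ≤ (T j).card) :
    ∃ f : ι → α, Function.Injective f ∧ ∀ i, f i ∈ T i := by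
  classical
  refine (Finset.all_card_le_biUnion_card_iff_exists_injective T).1 fun s ↦ ?_
  by_cases hlarge : ∃ i ∈ s, Fintype.card ι ≤ (T i).card
  · obtain ⟨i, his, hi⟩ := hlarge
    calc s.card ≤ Fintype.card ι := s.card_le_univ
      _ ≤ (T i).card := hi
      _ ≤ (s.biUnion T).card := Finset.card_le_card (Finset.subset_biUnion_of_mem T his)
  · have hinj : Set.InjOn r s := fun i his j hjs hij ↦ by
      by_contra hne
      exact (hcard i j hne hij).elim (fun h ↦ hlarge ⟨i, his, h⟩) fun h ↦ hlarge ⟨j, hjs, h⟩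
    exact Finset.card_le_card_of_injOn r
      (fun i his ↦ Finset.mem_biUnion.2 ⟨i, his, hr i⟩) hinj

variable {G : Type*} [AddCommGroup G] [PartialOrder G] [IsOrderedAddMonoid G]
  [LocallyFiniteOrder G]

lemma succ_le_card_Icc_nsmul {a b : G} (hab : a < b) (m : ℕ) :
    m + 1 ≤ (Finset.Icc (m • a) (m • b)).card := by
  have hpos : 0 < b - a := sub_pos.2 hab
  have hmem : ∀ k ∈ Finset.range (m + 1), m • a + k • (b - a) ∈ Finset.Icc (m • a) (m • b) := by
    intro k hk
    have hkm : k ≤ m := Finset.mem_range_succ_iff.1 hk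
    refine Finset.mem_Icc.2 ⟨le_add_of_nonneg_right (nsmul_nonneg hpos.le k), ?_⟩
    calc m • a + k • (b - a) ≤ m • a + m • (b - a) := by gcongr
      _ = m • b := by rw [← nsmul_add, add_sub_cancel]
  have hinj : Function.Injective fun k : ℕ ↦ m • a + k • (b - a) :=
    (add_right_injective _).comp (nsmul_left_strictMono hpos).injective
  simpa using Finset.card_le_card_of_injOn _ hmem hinj.injOn

lemma exists_injective_mem_Icc_nsmul [IsAddTorsionFree G] {a b : ι → G} {m : ℕ} (hm : m ≠ 0)
    (hcard : Fintype.card ι ≤ m + 1) (hle : ∀ i, a i ≤ b i)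
    (hlt : ∀ i j, i ≠ j → a i = a j → a i < b i ∨ a j < b j) :
    ∃ f : ι → G, Function.Injective f ∧ ∀ i, f i ∈ Set.Icc (m • a i) (m • b i) := by
  have hlarge : ∀ i, a i < b i → Fintype.card ι ≤ (Finset.Icc (m • a i) (m • b i)).card :=
    fun i hi ↦ hcard.trans (succ_le_card_Icc_nsmul hi m)
  obtain ⟨f, hf, hfmem⟩ := exists_injective_mem_of_card_le
    (T := fun i ↦ Finset.Icc (m • a i) (m • b i)) (r := fun i ↦ m • a i)
    (fun i ↦ Finset.left_mem_Icc.2 (nsmul_le_nsmul_right (hle i) m))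
    (fun i j hij hr ↦ (hlt i j hij (nsmul_right_injective hm hr)).imp (hlarge i) (hlarge j))
  exact ⟨f, hf, fun i ↦ Finset.mem_Icc.1 (hfmem i)⟩

end DistinctRepresentatives

lemma dinf_le_d1 (p q : ℝ × ℝ) : dinf p q ≤ d1 p q :=
  max_le (le_add_of_nonneg_right (abs_nonneg _)) (le_add_of_nonneg_left (abs_nonneg _))

lemma dinf_le_d2 (p q : ℝ × ℝ) : dinf p q ≤ d2 p q :=
  max_le (Real.abs_le_sqrt (le_add_of_nonneg_right (sq_nonneg _)))
    (Real.abs_le_sqrt (le_add_of_nonneg_left (sq_nonneg _)))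

lemma lt_of_rect_nontrivial {a b : ℤ × ℤ} (hab : a ≤ b)
    (h : (rect a.1 b.1 a.2 b.2).Nontrivial) : a < b := by
  refine hab.lt_of_ne ?_
  rintro rfl
  simp [rect] at h

/-- The point `z / m` of the grid `(1/m)ℤ²`, indexed by its integer numerators `z`. For `m = 0` it
is the origin, by division by zero. -/
noncomputable def gridPoint (m : ℕ) (z : ℤ × ℤ) : ℝ × ℝ := (z.1 / m, z.2 / m)

lemma gridPoint_mem_rect {m : ℕ} (hm : 0 < m) {a b z : ℤ × ℤ}
    (hz : z ∈ Set.Icc (m • a) (m • b)) : gridPoint m z ∈ rect a.1 b.1 a.2 b.2 := by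
  have hdiv {c d k : ℤ} (hck : m • c ≤ k) (hkd : k ≤ m • d) :
      (k / m : ℝ) ∈ Set.Icc (c : ℝ) d := by
    have hm' : (0 : ℝ) < m := Nat.cast_pos.2 hm
    rw [nsmul_eq_mul, mul_comm] at hck hkd
    exact ⟨(le_div_iff₀ hm').2 (mod_cast hck), (div_le_iff₀ hm').2 (mod_cast hkd)⟩
  exact ⟨hdiv hz.1.1 hz.2.1, hdiv hz.1.2 hz.2.2⟩

lemma one_div_le_dinf_gridPoint (m : ℕ) {z w : ℤ × ℤ} (hzw : z ≠ w) :
    (1 / m : ℝ) ≤ dinf (gridPoint m z) (gridPoint m w) := by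
  have hdiv {k l : ℤ} (hkl : k ≠ l) : (1 / m : ℝ) ≤ |(k / m : ℝ) - l / m| := by
    have hone : (1 : ℝ) ≤ |(k : ℝ) - l| := mod_cast Int.one_le_abs (sub_ne_zero.2 hkl)
    rw [← sub_div, abs_div, Nat.abs_cast]
    gcongr
  rcases not_and_or.1 (mt Prod.ext_iff.2 hzw) with hfst | hsnd
  · exact le_max_of_le_left (hdiv hfst)
  · exact le_max_of_le_right (hdiv hsnd)

theorem stmt1_general {ι : Type*} [Fintype ι] {m : ℕ} (hm : 0 < m)
    (hcard : Fintype.card ι ≤ m + 1) (lo hi bo tp : ι → ℤ)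
    (hx : ∀ i, lo i ≤ hi i) (hy : ∀ i, bo i ≤ tp i)
    (hdup : ∀ i j, i ≠ j →
      rect (lo i) (hi i) (bo i) (tp i) = rect (lo j) (hi j) (bo j) (tp j) →
      (rect (lo i) (hi i) (bo i) (tp i)).Nontrivial) :
    ∃ p : ι → ℝ × ℝ,
      (∀ i, p i ∈ rect (lo i) (hi i) (bo i) (tp i)) ∧
      ∀ i j, i ≠ j →
        (1 / m : ℝ) ≤ d1 (p i) (p j) ∧
        (1 / m : ℝ) ≤ d2 (p i) (p j) ∧
        (1 / m : ℝ) ≤ dinf (p i) (p j) := by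
  let a (i : ι) : ℤ × ℤ := (lo i, bo i)
  let b (i : ι) : ℤ × ℤ := (hi i, tp i)
  have hle (i : ι) : a i ≤ b i := ⟨hx i, hy i⟩
  have hlt (i j : ι) (hij : i ≠ j) (haij : a i = a j) : a i < b i ∨ a j < b j := by
    by_contra! hpoint
    have hi_point : a i = b i := eq_of_le_of_not_lt (hle i) hpoint.1
    have hj_point : a j = b j := eq_of_le_of_not_lt (hle j) hpoint.2
    have hbij : b i = b j := by rw [← hi_point, ← hj_point, haij]
    have hrect : rect (a i).1 (b i).1 (a i).2 (b i).2 = rect (a j).1 (b j).1 (a j).2 (b j).2 := by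
      rw [haij, hbij]
    exact hpoint.1 (lt_of_rect_nontrivial (hle i) (hdup i j hij hrect))
  obtain ⟨f, hf, hfmem⟩ := exists_injective_mem_Icc_nsmul hm.ne' hcard hle hlt
  refine ⟨fun i ↦ gridPoint m (f i), fun i ↦ gridPoint_mem_rect hm (hfmem i), fun i j hij ↦ ?_⟩
  have hdinf := one_div_le_dinf_gridPoint m (hf.ne hij)
  exact ⟨hdinf.trans (dinf_le_d1 _ _), hdinf.trans (dinf_le_d2 _ _), hdinf⟩

theorem stmt1 (n : ℕ) (hn : 2 ≤ n) (lo hi bo tp : Fin n → ℤ)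
    (hx : ∀ i, lo i ≤ hi i) (hy : ∀ i, bo i ≤ tp i)
    (hdup : ∀ i j, i ≠ j →
      rect (lo i : ℝ) (hi i : ℝ) (bo i : ℝ) (tp i : ℝ) =
        rect (lo j : ℝ) (hi j : ℝ) (bo j : ℝ) (tp j : ℝ) →
      ∃ x ∈ rect (lo i : ℝ) (hi i : ℝ) (bo i : ℝ) (tp i : ℝ),
        ∃ y ∈ rect (lo i : ℝ) (hi i : ℝ) (bo i : ℝ) (tp i : ℝ), x ≠ y) :
    ∃ p : Fin n → ℝ × ℝ,
      (∀ i, p i ∈ rect (lo i : ℝ) (hi i : ℝ) (bo i : ℝ) (tp i : ℝ)) ∧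
      ∀ i j, i ≠ j →
        (1 / n : ℝ) ≤ d1 (p i) (p j) ∧
        (1 / n : ℝ) ≤ d2 (p i) (p j) ∧
        (1 / n : ℝ) ≤ dinf (p i) (p j) :=
  stmt1_general (by lia) (by simp) lo hi bo tp hx hy hdup
end

section
/- Let R₁, …, Rₙ (n ≥ 2) be axis-aligned rectangles in ℝ², where Rᵢ = [ℓᵢ, rᵢ] × [bᵢ, tᵢ]. Then the optimal value δ*_∞ for the L_∞ distance equals (tᵢ − bⱼ)/k or (rᵢ − ℓⱼ)/k for some indices i ≠ j and some integer k with 1 ≤ k ≤ n. -/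
open Set

/-- The minimum pairwise distance of the points `p 0, …, p (n-1)` with respect to
the distance function `d`. -/
noncomputable def minPairDist {n : ℕ} (d : (ℝ × ℝ) → (ℝ × ℝ) → ℝ)
    (p : Fin n → ℝ × ℝ) : ℝ :=
  sInf {x : ℝ | ∃ i j : Fin n, i ≠ j ∧ x = d (p i) (p j)}

/-- The set of values of selections from the rectangles `R i`:
the minimum pairwise distance over selections, with respect to `d`. -/
noncomputable def selVals {n : ℕ} (d : (ℝ × ℝ) → (ℝ × ℝ) → ℝ)
    (R : Fin n → Set (ℝ × ℝ)) : Set ℝ :=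
  {v : ℝ | ∃ p : Fin n → ℝ × ℝ, (∀ i, p i ∈ R i) ∧ v = minPairDist d p}

/-!
Fix an optimal selection with value `δ` and order the indices along each axis by the corresponding
coordinate. Relate `i` to `j` along an axis when `j` comes after `i` and lies at least `δ` further.
Points with these order relations and spacing `δ'` exist on that axis if and only if no chain of
`k` steps forces a contradiction, that is, `lo i + k * δ' ≤ hi j` whenever such a chain leads from
`i` to `j`: push every point as far left as the chains ending in it allow. If `δ` is not one of the
quotients `(hi j - lo i) / k`, these finitely many inequalities are strict at `δ` for `k ≥ 1`, hence
survive a small increase of `δ`, on both axes at once. This contradicts optimality.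
-/

open Filter Topology
open scoped SetRel

section Chains

variable {α : Type*} {r : SetRel α α} {lo hi x : α → ℝ} {δ : ℝ}

lemma head_add_length_mul_le_last (hstep : ∀ i j, i ~[r] j → x i + δ ≤ x j) (s : RelSeries r) :
    x s.head + s.length * δ ≤ x s.last := by
  induction s using RelSeries.inductionOn' with
  | singleton i => simp
  | snoc s j hj ih =>
    have hlast := hstep _ _ hj
    simp only [RelSeries.head_snoc, RelSeries.last_snoc, RelSeries.snoc_length, Nat.cast_add,
      Nat.cast_one]
    linarith

/-- The combinatorial feasibility condition for placing points in the intervals `[lo i, hi i]` with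
spacing `δ` between `r`-related indices: an `r`-chain of points, placed tightly from the left end of
its first interval, does not overshoot the right end of its last interval. -/
def ChainsFit (r : SetRel α α) (lo hi : α → ℝ) (δ : ℝ) : Prop :=
  ∀ s : RelSeries r, lo s.head + s.length * δ ≤ hi s.last

lemma chainsFit_of_mem_Icc (hx : ∀ i, x i ∈ Icc (lo i) (hi i))
    (hstep : ∀ i j, i ~[r] j → x i + δ ≤ x j) : ChainsFit r lo hi δ := fun s =>
  calc
    lo s.head + s.length * δ ≤ x s.head + s.length * δ := by gcongr; exact (hx _).1
    _ ≤ x s.last := head_add_length_mul_le_last hstep s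
    _ ≤ hi s.last := (hx _).2

/-- The leftmost position of the point `i` under the constraints of `ChainsFit`: the furthest end of
a tightly placed `r`-chain leading to `i`. It is a junk value if these ends are unbounded. -/
noncomputable def leftmostPlacement (r : SetRel α α) (lo : α → ℝ) (δ : ℝ) (i : α) : ℝ :=
  ⨆ s : {s : RelSeries r // s.last = i}, (lo s.1.head + s.1.length * δ)

lemma leftmostPlacement_le {i : α} {c : ℝ}
    (hc : ∀ s : RelSeries r, s.last = i → lo s.head + s.length * δ ≤ c) :
    leftmostPlacement r lo δ i ≤ c :=
  have : Nonempty {s : RelSeries r // s.last = i} := ⟨.singleton r i, RelSeries.last_singleton i⟩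
  ciSup_le fun s => hc s.1 s.2

namespace ChainsFit

lemma le_leftmostPlacement (h : ChainsFit r lo hi δ) (s : RelSeries r) :
    lo s.head + s.length * δ ≤ leftmostPlacement r lo δ s.last :=
  le_ciSup (f := fun t : {t : RelSeries r // t.last = s.last} => lo t.1.head + t.1.length * δ)
    ⟨hi s.last, by rintro _ ⟨⟨t, ht⟩, rfl⟩; exact (h t).trans_eq (congrArg hi ht)⟩ ⟨s, rfl⟩

lemma leftmostPlacement_mem_Icc (h : ChainsFit r lo hi δ) (i : α) :
    leftmostPlacement r lo δ i ∈ Icc (lo i) (hi i) :=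
  ⟨by simpa using h.le_leftmostPlacement (.singleton r i),
    leftmostPlacement_le fun s hs => hs ▸ h s⟩

lemma leftmostPlacement_add_le (h : ChainsFit r lo hi δ) {i j : α} (hij : i ~[r] j) :
    leftmostPlacement r lo δ i + δ ≤ leftmostPlacement r lo δ j := by
  refine le_sub_iff_add_le.1 (leftmostPlacement_le ?_)
  rintro s rfl
  have hsnoc := h.le_leftmostPlacement (s.snoc j hij)
  simp only [RelSeries.head_snoc, RelSeries.last_snoc, RelSeries.snoc_length, Nat.cast_add,
    Nat.cast_one] at hsnoc
  linarith

end ChainsFit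

lemma relSeries_injective {β : Type*} [Preorder β] {key : α → β}
    (hkey : ∀ i j, i ~[r] j → key i < key j) (s : RelSeries r) : Function.Injective s :=
  (Fin.strictMono_iff_lt_succ.2 fun i => hkey _ _ (s.step i) :
    StrictMono (key ∘ s)).injective.of_comp

lemma relSeries_length_lt_card [Fintype α] {s : RelSeries r} (hs : Function.Injective s) :
    s.length < Fintype.card α := by
  simpa using Fintype.card_le_of_injective s hs

end Chains

section Spacing

variable {α : Type*} [Fintype α] {lo hi : α → ℝ} {δ : ℝ}

/-- The spacings at which a chain of `k` steps fits exactly between the left end of one interval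
`[lo j, hi j]` and the right end of another one. -/
def criticalSpacings (lo hi : α → ℝ) : Set ℝ :=
  {δ | ∃ i j : α, ∃ k : ℕ, i ≠ j ∧ 1 ≤ k ∧ k < Fintype.card α ∧ δ = (hi i - lo j) / k}

lemma ChainsFit.lt_of_notMem_criticalSpacings {r : SetRel α α} (h : ChainsFit r lo hi δ)
    (hδ : δ ∉ criticalSpacings lo hi) {s : RelSeries r} (hs : Function.Injective s)
    (hpos : 0 < s.length) : lo s.head + s.length * δ < hi s.last := by
  refine (h s).lt_of_ne fun heq => hδ ⟨s.last, s.head, s.length, ?_, hpos,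
    relSeries_length_lt_card hs, ?_⟩
  · exact hs.ne (Fin.pos_iff_ne_zero.1 hpos)
  · rw [eq_div_iff (by positivity), ← heq]
    ring

lemma ChainsFit.eventually_nhds {r : SetRel α α} (h : ChainsFit r lo hi δ)
    (hδ : δ ∉ criticalSpacings lo hi) (hinj : ∀ s : RelSeries r, Function.Injective s) :
    ∀ᶠ δ' in 𝓝 δ, ChainsFit r lo hi δ' := by
  have hstrict : ∀ᶠ δ' in 𝓝 δ, ∀ i j, ∀ k ∈ Finset.range (Fintype.card α),
      lo i + k * δ < hi j → lo i + k * δ' < hi j := by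
    simp only [eventually_all, eventually_all_finset]
    intro i j k _ hlt
    have hcont : Continuous fun δ' : ℝ => lo i + k * δ' := by fun_prop
    exact hcont.continuousAt.eventually_lt_const hlt
  filter_upwards [hstrict] with δ' hδ' s
  rcases s.length.eq_zero_or_pos with hzero | hpos
  · simpa [hzero] using h s
  · exact (hδ' _ _ _ (Finset.mem_range.2 (relSeries_length_lt_card (hinj s)))
      (h.lt_of_notMem_criticalSpacings hδ (hinj s) hpos)).le

end Spacing

section Separation

variable {α : Type*} [LinearOrder α] {lo hi x : α → ℝ} {δ : ℝ}

/-- `i` is related to `j` if `x j` lies at least `δ` to the right of `x i`. Ties `x i = x j`, which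
matter only for `δ ≤ 0`, are broken by the order of `α`, so that the relation is acyclic. -/
def separationRel (x : α → ℝ) (δ : ℝ) : SetRel α α :=
  {(i, j) | toLex (x i, i) < toLex (x j, j) ∧ x i + δ ≤ x j}

lemma separationRel_or_separationRel {i j : α} (hij : i ≠ j) (hδ : δ ≤ |x i - x j|) :
    i ~[separationRel x δ] j ∨ j ~[separationRel x δ] i := by
  have hkey : toLex (x i, i) ≠ toLex (x j, j) := fun h => hij (congrArg (fun p => (ofLex p).2) h)
  rcases hkey.lt_or_gt with h | h
  · have hle : x i ≤ x j := Prod.Lex.monotone_fst _ _ h.le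
    rw [abs_of_nonpos (sub_nonpos.2 hle)] at hδ
    exact .inl ⟨h, by linarith⟩
  · have hle : x j ≤ x i := Prod.Lex.monotone_fst _ _ h.le
    rw [abs_of_nonneg (sub_nonneg.2 hle)] at hδ
    exact .inr ⟨h, by linarith⟩

lemma eventually_exists_spacing [Fintype α] (hx : ∀ i, x i ∈ Icc (lo i) (hi i))
    (hδ : δ ∉ criticalSpacings lo hi) :
    ∀ᶠ δ' in 𝓝 δ, ∃ x' : α → ℝ, (∀ i, x' i ∈ Icc (lo i) (hi i)) ∧
      ∀ i j, i ≠ j → δ ≤ |x i - x j| → δ' ≤ |x' i - x' j| := by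
  have hfit : ChainsFit (separationRel x δ) lo hi δ := chainsFit_of_mem_Icc hx fun _ _ h => h.2
  filter_upwards [hfit.eventually_nhds hδ (relSeries_injective fun _ _ h => h.1)] with δ' hfit'
  refine ⟨_, hfit'.leftmostPlacement_mem_Icc, fun i j hij hsep => le_abs.2 ?_⟩
  rcases separationRel_or_separationRel hij hsep with h | h
  · exact .inr (by linarith [hfit'.leftmostPlacement_add_le h])
  · exact .inl (by linarith [hfit'.leftmostPlacement_add_le h])

end Separation

lemma offDiag_univ_nonempty {α : Type*} [Fintype α] [Nontrivial α] :
    (Finset.univ : Finset α).offDiag.Nonempty :=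
  let ⟨i, j, hij⟩ := exists_pair_ne α
  ⟨(i, j), by simpa using hij⟩

section Selection

variable {n : ℕ} [Nontrivial (Fin n)] {d : ℝ × ℝ → ℝ × ℝ → ℝ}

lemma minPairDist_eq_inf' (d : ℝ × ℝ → ℝ × ℝ → ℝ) (p : Fin n → ℝ × ℝ) :
    minPairDist d p = (Finset.univ : Finset (Fin n)).offDiag.inf'
      offDiag_univ_nonempty fun q => d (p q.1) (p q.2) := by
  rw [Finset.inf'_eq_csInf_image, minPairDist]
  congr 1
  ext v
  simp [eq_comm]

lemma le_minPairDist_iff {p : Fin n → ℝ × ℝ} {c : ℝ} :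
    c ≤ minPairDist d p ↔ ∀ i j, i ≠ j → c ≤ d (p i) (p j) := by
  simp [minPairDist_eq_inf']

lemma continuous_minPairDist (hd : Continuous (Function.uncurry d)) :
    Continuous (minPairDist d : (Fin n → ℝ × ℝ) → ℝ) := by
  rw [funext (minPairDist_eq_inf' d)]
  exact Continuous.finset_inf'_apply _ fun q _ =>
    hd.comp₂ (continuous_apply q.1) (continuous_apply q.2)

lemma isGreatest_sSup_selVals (hd : Continuous (Function.uncurry d)) {R : Fin n → Set (ℝ × ℝ)}
    (hcompact : ∀ i, IsCompact (R i)) (hne : ∀ i, (R i).Nonempty) :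
    IsGreatest (selVals d R) (sSup (selVals d R)) := by
  have himage : selVals d R = minPairDist d '' univ.pi R := by
    ext v
    simp [selVals, eq_comm]
  rw [himage]
  exact ((isCompact_univ_pi hcompact).image (continuous_minPairDist hd)).isGreatest_sSup
    ((univ_pi_nonempty_iff.2 hne).image _)

lemma mem_criticalSpacings_of_isGreatest_selVals {lo hi bo tp : Fin n → ℝ} {δ : ℝ}
    (hδ : IsGreatest (selVals dinf fun i => rect (lo i) (hi i) (bo i) (tp i)) δ) :
    δ ∈ criticalSpacings bo tp ∨ δ ∈ criticalSpacings lo hi := by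
  obtain ⟨⟨p, hp, hpδ⟩, hmax⟩ := hδ
  by_contra! ⟨hy, hx⟩
  have hsep : ∀ i j, i ≠ j → δ ≤ dinf (p i) (p j) := le_minPairDist_iff.1 hpδ.le
  have hspread := (eventually_exists_spacing (fun i => (hp i).1) hx).and
    (eventually_exists_spacing (fun i => (hp i).2) hy)
  obtain ⟨δ', ⟨⟨x, hxmem, hxsep⟩, y, hymem, hysep⟩, hlt : δ < δ'⟩ :=
    ((hspread.filter_mono nhdsWithin_le_nhds).and (self_mem_nhdsWithin (s := Ioi δ))).exists
  have hle : δ' ≤ minPairDist dinf fun i => (x i, y i) :=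
    le_minPairDist_iff.2 fun i j hij => le_max_iff.2 <|
      (le_max_iff.1 (hsep i j hij)).imp (hxsep i j hij) (hysep i j hij)
  exact hlt.not_ge (hle.trans (hmax ⟨_, fun i => ⟨hxmem i, hymem i⟩, rfl⟩))

end Selection

lemma continuous_dinf : Continuous (Function.uncurry dinf) := by
  unfold Function.uncurry dinf
  fun_prop

theorem stmt2 (n : ℕ) (hn : 2 ≤ n) (lo hi bo tp : Fin n → ℝ)
    (hx : ∀ i, lo i ≤ hi i) (hy : ∀ i, bo i ≤ tp i) :
    ∃ i j : Fin n, ∃ k : ℕ, i ≠ j ∧ 1 ≤ k ∧ k ≤ n ∧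
      (sSup (selVals dinf fun i => rect (lo i) (hi i) (bo i) (tp i))
          = (tp i - bo j) / k ∨
       sSup (selVals dinf fun i => rect (lo i) (hi i) (bo i) (tp i))
          = (hi i - lo j) / k) := by
  have : Nontrivial (Fin n) := Fin.nontrivial_iff_two_le.2 hn
  have hgreatest : IsGreatest (selVals dinf fun i => rect (lo i) (hi i) (bo i) (tp i)) _ :=
    isGreatest_sSup_selVals continuous_dinf (fun i => isCompact_Icc.prod isCompact_Icc)
      fun i => (nonempty_Icc.2 (hx i)).prod (nonempty_Icc.2 (hy i))
  rcases mem_criticalSpacings_of_isGreatest_selVals hgreatest with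
    ⟨i, j, k, hij, hk, hkn, heq⟩ | ⟨i, j, k, hij, hk, hkn, heq⟩
  · exact ⟨i, j, k, hij, hk, by simpa using hkn.le, .inl heq⟩
  · exact ⟨i, j, k, hij, hk, by simpa using hkn.le, .inr heq⟩
end

section
/- Let γ > 0 and let (i,j) and (i',j') be two distinct L-anchors. Then for every point p in the L-shape L_γ(i,j) and every point q in the L-shape L_γ(i',j'), the L_∞ distance satisfies d_∞(p,q) ≥ γ. -/
open Set

/-- The L-shape with anchor grid point `(i,j)` in the grid with spacing `γ`. -/
def lShape (γ : ℝ) (i j : ℤ) : Set (ℝ × ℝ) :=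
  ({(i : ℝ) * γ} ×ˢ Set.Icc ((j : ℝ) * γ) (((j : ℝ) + 1) * γ)) ∪
  (Set.Icc ((i : ℝ) * γ) (((i : ℝ) + 1) * γ) ×ˢ {(j : ℝ) * γ})

/-- `(i,j)` is an L-anchor if `i ≡ j (mod 3)`. -/
def lAnchor (i j : ℤ) : Prop := i ≡ j [ZMOD 3]

/-!
Two points of L-shapes whose anchors differ by at least `2` in some coordinate are already `γ`-apart
in that coordinate. Otherwise the congruence mod `3` forces distinct anchors to differ by
`±(1, 1)`: each arm of the lower L-shape then lies on the lower left boundary of its grid cell,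
so it is `γ`-apart from the diagonally adjacent cell in one of the two coordinates.
-/

theorem dinf_comm (p q : ℝ × ℝ) : dinf p q = dinf q p := by
  simp only [dinf, abs_sub_comm]

theorem dinf_swap (p q : ℝ × ℝ) : dinf p.swap q.swap = dinf p q :=
  max_comm _ _

theorem le_dinf_of_fst_add_le {γ : ℝ} {p q : ℝ × ℝ} (h : p.1 + γ ≤ q.1) : γ ≤ dinf p q :=
  calc
    γ ≤ q.1 - p.1 := by linarith
    _ ≤ |p.1 - q.1| := by simpa only [neg_sub] using neg_le_abs (p.1 - q.1)
    _ ≤ dinf p q := le_max_left _ _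

theorem le_dinf_of_snd_add_le {γ : ℝ} {p q : ℝ × ℝ} (h : p.2 + γ ≤ q.2) : γ ≤ dinf p q :=
  dinf_swap p q ▸ le_dinf_of_fst_add_le (p := p.swap) (q := q.swap) h

section LShape

variable {γ : ℝ} {i j i' j' : ℤ} {p q : ℝ × ℝ}

theorem swap_mem_lShape (hp : p ∈ lShape γ i j) : p.swap ∈ lShape γ j i :=
  hp.symm.imp And.symm And.symm

theorem fst_eq_or_snd_eq_of_mem_lShape (hp : p ∈ lShape γ i j) : p.1 = i * γ ∨ p.2 = j * γ :=
  hp.imp And.left And.right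

theorem nonneg_of_mem_lShape (hp : p ∈ lShape γ i j) : 0 ≤ γ := by
  rcases hp with ⟨-, lower, upper⟩ | ⟨⟨lower, upper⟩, -⟩ <;> linarith

theorem fst_mem_Icc_of_mem_lShape (hp : p ∈ lShape γ i j) :
    p.1 ∈ Icc (i * γ) ((i + 1) * γ) := by
  have hγ : 0 ≤ γ := nonneg_of_mem_lShape hp
  rcases hp with ⟨hfst, -⟩ | ⟨hfst, -⟩
  · rw [mem_singleton_iff.mp hfst]
    exact left_mem_Icc.mpr (by linarith)
  · exact hfst

theorem snd_mem_Icc_of_mem_lShape (hp : p ∈ lShape γ i j) :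
    p.2 ∈ Icc (j * γ) ((j + 1) * γ) :=
  fst_mem_Icc_of_mem_lShape (swap_mem_lShape hp)

theorem le_dinf_of_add_two_le (hp : p ∈ lShape γ i j) (hq : q ∈ lShape γ i' j')
    (hi : i + 2 ≤ i') : γ ≤ dinf p q := by
  have hγ : 0 ≤ γ := nonneg_of_mem_lShape hp
  have hi_real : (i : ℝ) + 2 ≤ i' := mod_cast hi
  apply le_dinf_of_fst_add_le
  calc
    p.1 + γ ≤ (i + 1) * γ + γ := by gcongr; exact (fst_mem_Icc_of_mem_lShape hp).2
    _ = (i + 2) * γ := by ring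
    _ ≤ i' * γ := by gcongr
    _ ≤ q.1 := (fst_mem_Icc_of_mem_lShape hq).1

theorem le_dinf_of_two_le_abs_sub (hp : p ∈ lShape γ i j) (hq : q ∈ lShape γ i' j')
    (hi : 2 ≤ |i - i'|) : γ ≤ dinf p q := by
  rcases le_abs'.mp hi with hlt | hgt
  · exact le_dinf_of_add_two_le hp hq (by lia)
  · rw [dinf_comm]
    exact le_dinf_of_add_two_le hq hp (by lia)

theorem le_dinf_of_lt_of_lt (hp : p ∈ lShape γ i j) (hq : q ∈ lShape γ i' j')
    (hi : i < i') (hj : j < j') : γ ≤ dinf p q := by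
  have hγ : 0 ≤ γ := nonneg_of_mem_lShape hp
  have mul_add_le {m n : ℤ} (hmn : m < n) : (m : ℝ) * γ + γ ≤ n * γ := by
    rw [← add_one_mul]
    gcongr
    exact_mod_cast hmn
  rcases fst_eq_or_snd_eq_of_mem_lShape hp with hfst | hsnd
  · apply le_dinf_of_fst_add_le
    rw [hfst]
    exact (mul_add_le hi).trans (fst_mem_Icc_of_mem_lShape hq).1
  · apply le_dinf_of_snd_add_le
    rw [hsnd]
    exact (mul_add_le hj).trans (snd_mem_Icc_of_mem_lShape hq).1

end LShape

theorem lAnchor.two_le_abs_sub_or_lt_and_lt {i j i' j' : ℤ} (h : lAnchor i j)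
    (h' : lAnchor i' j') (hne : (i, j) ≠ (i', j')) :
    2 ≤ |i - i'| ∨ 2 ≤ |j - j'| ∨ (i < i' ∧ j < j') ∨ (i' < i ∧ j' < j) := by
  have hsub : i - i' ≡ j - j' [ZMOD 3] := Int.ModEq.sub h h'
  by_contra! hnear
  obtain ⟨hi, hj, hlt, hgt⟩ := hnear
  have hdiff_eq : i - i' = j - j' := by
    rw [abs_lt] at hi hj
    unfold Int.ModEq at hsub
    lia
  have hi_eq : i = i' := by lia
  have hj_eq : j = j' := by lia
  exact hne (Prod.ext hi_eq hj_eq)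

theorem stmt6 (γ : ℝ) (hγ : 0 < γ) (i j i' j' : ℤ)
    (h : lAnchor i j) (h' : lAnchor i' j') (hne : (i, j) ≠ (i', j'))
    (p q : ℝ × ℝ) (hp : p ∈ lShape γ i j) (hq : q ∈ lShape γ i' j') :
    γ ≤ dinf p q := by
  rcases h.two_le_abs_sub_or_lt_and_lt h' hne with hi | hj | ⟨hi, hj⟩ | ⟨hi, hj⟩
  · exact le_dinf_of_two_le_abs_sub hp hq hi
  · rw [← dinf_swap]
    exact le_dinf_of_two_le_abs_sub (swap_mem_lShape hp) (swap_mem_lShape hq) hj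
  · exact le_dinf_of_lt_of_lt hp hq hi hj
  · rw [dinf_comm]
    exact le_dinf_of_lt_of_lt hq hp hi hj
end

section
/- Let γ > 0 and let U be the union of the plus-shapes P_γ(i,j) over all plus-anchors (i,j). Then every nonempty axis-aligned rectangle r ⊆ ℝ² that is disjoint from U is contained in one of the following blocks, for some integers a, b: [aγ, (a+4)γ] × [bγ, (b+1)γ], or [aγ, (a+1)γ] × [bγ, (b+4)γ], or [aγ, (a+2)γ] × [bγ, (b+2)γ]. -/
open Set

/-- The plus-shape with anchor grid point `(i,j)` in the grid with spacing `γ`. -/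
def plusShape (γ : ℝ) (i j : ℤ) : Set (ℝ × ℝ) :=
  ({(i : ℝ) * γ} ×ˢ Set.Icc (((j : ℝ) - 1) * γ) (((j : ℝ) + 1) * γ)) ∪
  (Set.Icc (((i : ℝ) - 1) * γ) (((i : ℝ) + 1) * γ) ×ˢ {(j : ℝ) * γ})

/-- `(i,j)` is a plus-anchor if `i` is even and `i ≡ j (mod 4)`. -/
def plusAnchor (i j : ℤ) : Prop := Even i ∧ i ≡ j [ZMOD 4]

/-!
Suppose a grid line `x = iγ` with `i` even crosses the rectangle. The vertical bars on that line
leave only the gaps `(j - 1)γ < y < (j + 1)γ` with `(i ± 2, j)` anchors, so the height of the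
rectangle lies in such a gap. The vertical bars at `(i ± 2, j)` span exactly this gap and confine
the width to `(i - 2)γ < x < (i + 2)γ`. If the rectangle also crosses the row `y = jγ`, the
horizontal bars at `(i ± 2, j)` confine the width further to `(i - 1)γ < x < (i + 1)γ`, giving a
`2 × 2` block; otherwise the rectangle stays on one side of that row, giving a `4 × 1` block. The
configuration is symmetric under swapping the axes, and a rectangle crossing no even line in
either direction sits in a `2 × 2` block.
-/

section

variable {γ x1 x2 y1 y2 : ℝ} {i j : ℤ}

lemma plusAnchor_iff_emod : plusAnchor i j ↔ i % 2 = 0 ∧ (j - i) % 4 = 0 := by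
  rw [plusAnchor, Int.even_iff, Int.modEq_iff_dvd, Int.dvd_iff_emod_eq_zero]

lemma plusAnchor.symm (h : plusAnchor i j) : plusAnchor j i := by
  rw [plusAnchor_iff_emod] at h ⊢
  lia

lemma exists_plusAnchor_mul_mem_Ioc (hγ : 0 < γ) (hi : Even i) (c : ℝ) :
    ∃ j : ℤ, plusAnchor i j ∧ (j : ℝ) * γ ∈ Ioc c (c + 4 * γ) := by
  obtain ⟨m, hm, -⟩ := existsUnique_add_zsmul_mem_Ioc (by positivity : 0 < 4 * γ) (i * γ) c
  refine ⟨i + 4 * m, ⟨hi, by simp [Int.ModEq]⟩, ?_⟩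
  convert hm using 1
  rw [zsmul_eq_mul]
  push_cast
  ring

lemma exists_mul_le_and_le_of_forall_even_notMem_Icc (hγ : 0 < γ)
    (h : ∀ i : ℤ, Even i → (i : ℝ) * γ ∉ Icc x1 x2) :
    ∃ a : ℤ, (a : ℝ) * γ ≤ x1 ∧ x2 ≤ ((a : ℝ) + 2) * γ := by
  obtain ⟨m, ⟨hm_le, hm_lt⟩, -⟩ := existsUnique_zsmul_near_of_pos (by positivity : 0 < 2 * γ) x1
  rw [zsmul_eq_mul] at hm_le hm_lt
  have next_notMem := h (2 * (m + 1)) (even_two_mul _)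
  push_cast at hm_lt next_notMem
  refine ⟨2 * m, by push_cast; linarith, ?_⟩
  by_contra! hx2
  push_cast at hx2
  exact next_notMem ⟨by linarith, by linarith⟩

/-- The `m × n` block of grid cells with lower left corner `(aγ, bγ)`. The side lengths `m` and `n`
are real so that numerals need no cast. -/
def gridBlock (γ : ℝ) (a b : ℤ) (m n : ℝ) : Set (ℝ × ℝ) :=
  rect (a * γ) ((a + m) * γ) (b * γ) ((b + n) * γ)

lemma rect_subset_gridBlock {a b : ℤ} {m n : ℝ} (hx1 : a * γ ≤ x1) (hx2 : x2 ≤ (a + m) * γ)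
    (hy1 : b * γ ≤ y1) (hy2 : y2 ≤ (b + n) * γ) : rect x1 x2 y1 y2 ⊆ gridBlock γ a b m n :=
  prod_mono (Icc_subset_Icc hx1 hx2) (Icc_subset_Icc hy1 hy2)

lemma swap_image_rect (a b c d : ℝ) : Prod.swap '' rect a b c d = rect c d a b :=
  image_swap_prod _ _

lemma swap_image_plusShape (γ : ℝ) (i j : ℤ) :
    Prod.swap '' plusShape γ i j = plusShape γ j i := by
  simp only [plusShape, image_union, image_swap_prod, union_comm]

lemma rect_subset_gridBlock_swap {a b : ℤ} {m n : ℝ} (h : rect x1 x2 y1 y2 ⊆ gridBlock γ a b m n) :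
    rect y1 y2 x1 x2 ⊆ gridBlock γ b a n m := by
  simpa only [gridBlock, swap_image_rect] using image_mono (f := Prod.swap) h

/-- The rectangle `[x1, x2] × [y1, y2]` is disjoint from all plus-shapes of the grid with
spacing `γ`. -/
def AvoidsPluses (γ x1 x2 y1 y2 : ℝ) : Prop :=
  ∀ ⦃i j : ℤ⦄, plusAnchor i j → Disjoint (rect x1 x2 y1 y2) (plusShape γ i j)

namespace AvoidsPluses

lemma swap (h : AvoidsPluses γ x1 x2 y1 y2) : AvoidsPluses γ y1 y2 x1 x2 := by
  intro i j hij
  rw [← swap_image_rect, ← swap_image_plusShape, disjoint_image_iff Prod.swap_injective]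
  exact h hij.symm

lemma column_notMem (h : AvoidsPluses γ x1 x2 y1 y2) (hγ : 0 ≤ γ) (hy : y1 ≤ y2)
    (hij : plusAnchor i j) (hy1 : y1 ≤ (j + 1) * γ) (hy2 : (j - 1) * γ ≤ y2) :
    (i : ℝ) * γ ∉ Icc x1 x2 := by
  intro hi
  have bar_nonempty : ((j : ℝ) - 1) * γ ≤ (j + 1) * γ := by gcongr; linarith
  refine not_disjoint_iff.2 ⟨(i * γ, max y1 ((j - 1) * γ)), ?_, Or.inl ?_⟩ (h hij)
  · exact ⟨hi, le_max_left _ _, max_le hy hy2⟩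
  · exact ⟨rfl, le_max_right _ _, max_le hy1 bar_nonempty⟩

lemma row_notMem (h : AvoidsPluses γ x1 x2 y1 y2) (hγ : 0 ≤ γ) (hx : x1 ≤ x2)
    (hij : plusAnchor i j) (hx1 : x1 ≤ (i + 1) * γ) (hx2 : (i - 1) * γ ≤ x2) :
    (j : ℝ) * γ ∉ Icc y1 y2 :=
  h.swap.column_notMem hγ hx hij.symm hx1 hx2

lemma exists_gap_of_column_mem (h : AvoidsPluses γ x1 x2 y1 y2) (hγ : 0 < γ) (hy : y1 ≤ y2)
    (hi : Even i) (hix : (i : ℝ) * γ ∈ Icc x1 x2) :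
    ∃ j : ℤ, plusAnchor (i + 2) j ∧ (j - 1) * γ < y1 ∧ y2 < (j + 1) * γ := by
  obtain ⟨j, hij, hj_gt, hj_le⟩ :=
    exists_plusAnchor_mul_mem_Ioc hγ (hi.add even_two) (y1 - γ)
  have anchor_below : plusAnchor i (j - 2) := by rw [plusAnchor_iff_emod] at hij ⊢; lia
  have anchor_above : plusAnchor i (j + 2) := by rw [plusAnchor_iff_emod] at hij ⊢; lia
  refine ⟨j, hij, ?_, ?_⟩ <;> by_contra! hbar
  · refine h.column_notMem hγ.le hy anchor_below ?_ ?_ hix <;> push_cast <;> linarith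
  · refine h.column_notMem hγ.le hy anchor_above ?_ ?_ hix <;> push_cast <;> linarith

lemma x_bounds_of_gap (h : AvoidsPluses γ x1 x2 y1 y2) (hγ : 0 < γ) (hy : y1 ≤ y2)
    (hix : (i : ℝ) * γ ∈ Icc x1 x2) (hright : plusAnchor (i + 2) j) (hleft : plusAnchor (i - 2) j)
    (hy1 : (j - 1) * γ < y1) (hy2 : y2 < (j + 1) * γ) :
    (i - 2) * γ < x1 ∧ x2 < (i + 2) * γ := by
  have right_notMem := h.column_notMem hγ.le hy hright (by linarith) (by linarith)
  have left_notMem := h.column_notMem hγ.le hy hleft (by linarith) (by linarith)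
  push_cast at right_notMem left_notMem
  constructor <;> by_contra! hcross
  · exact left_notMem ⟨hcross, by linarith [hix.2]⟩
  · exact right_notMem ⟨by linarith [hix.1], hcross⟩

lemma x_bounds_of_row_mem (h : AvoidsPluses γ x1 x2 y1 y2) (hγ : 0 < γ)
    (hix : (i : ℝ) * γ ∈ Icc x1 x2) (hright : plusAnchor (i + 2) j) (hleft : plusAnchor (i - 2) j)
    (hjy : (j : ℝ) * γ ∈ Icc y1 y2) :
    (i - 1) * γ < x1 ∧ x2 < (i + 1) * γ := by
  obtain ⟨hx1, hx2⟩ := hix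
  constructor <;> by_contra! hcross
  · refine h.row_notMem hγ.le (hx1.trans hx2) hleft ?_ ?_ hjy <;> push_cast <;> linarith
  · refine h.row_notMem hγ.le (hx1.trans hx2) hright ?_ ?_ hjy <;> push_cast <;> linarith

lemma exists_subset_gridBlock_of_column_mem (h : AvoidsPluses γ x1 x2 y1 y2) (hγ : 0 < γ)
    (hy : y1 ≤ y2) (hi : Even i) (hix : (i : ℝ) * γ ∈ Icc x1 x2) :
    ∃ a b : ℤ, rect x1 x2 y1 y2 ⊆ gridBlock γ a b 4 1 ∨
      rect x1 x2 y1 y2 ⊆ gridBlock γ a b 2 2 := by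
  obtain ⟨j, hright, hy1, hy2⟩ := h.exists_gap_of_column_mem hγ hy hi hix
  have hleft : plusAnchor (i - 2) j := by rw [plusAnchor_iff_emod] at hright ⊢; lia
  obtain ⟨hx1, hx2⟩ := h.x_bounds_of_gap hγ hy hix hright hleft hy1 hy2
  rcases lt_or_ge (j * γ) y1 with above_row | row_ge
  · refine ⟨i - 2, j, Or.inl (rect_subset_gridBlock ?_ ?_ ?_ ?_)⟩ <;> push_cast <;> linarith
  rcases lt_or_ge y2 (j * γ) with below_row | row_le
  · refine ⟨i - 2, j - 1, Or.inl (rect_subset_gridBlock ?_ ?_ ?_ ?_)⟩ <;> push_cast <;> linarith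
  · obtain ⟨hx1_near, hx2_near⟩ := h.x_bounds_of_row_mem hγ hix hright hleft ⟨row_ge, row_le⟩
    refine ⟨i - 1, j - 1, Or.inr (rect_subset_gridBlock ?_ ?_ ?_ ?_)⟩ <;> push_cast <;> linarith

end AvoidsPluses

end

theorem stmt7 (γ : ℝ) (hγ : 0 < γ) (x1 x2 y1 y2 : ℝ) (hx : x1 ≤ x2) (hy : y1 ≤ y2)
    (hdisj : Disjoint (rect x1 x2 y1 y2)
      (⋃ (ij : ℤ × ℤ) (_ : plusAnchor ij.1 ij.2), plusShape γ ij.1 ij.2)) :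
    ∃ a b : ℤ,
      rect x1 x2 y1 y2 ⊆
        rect ((a : ℝ) * γ) (((a : ℝ) + 4) * γ) ((b : ℝ) * γ) (((b : ℝ) + 1) * γ) ∨
      rect x1 x2 y1 y2 ⊆
        rect ((a : ℝ) * γ) (((a : ℝ) + 1) * γ) ((b : ℝ) * γ) (((b : ℝ) + 4) * γ) ∨
      rect x1 x2 y1 y2 ⊆
        rect ((a : ℝ) * γ) (((a : ℝ) + 2) * γ) ((b : ℝ) * γ) (((b : ℝ) + 2) * γ) := by
  have avoids : AvoidsPluses γ x1 x2 y1 y2 := fun i j hij ↦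
    disjoint_iUnion₂_right.1 hdisj (i, j) hij
  by_cases column : ∃ i : ℤ, Even i ∧ (i : ℝ) * γ ∈ Icc x1 x2
  · obtain ⟨i, hi, hix⟩ := column
    obtain ⟨a, b, wide | square⟩ := avoids.exists_subset_gridBlock_of_column_mem hγ hy hi hix
    · exact ⟨a, b, Or.inl wide⟩
    · exact ⟨a, b, Or.inr (Or.inr square)⟩
  by_cases row : ∃ j : ℤ, Even j ∧ (j : ℝ) * γ ∈ Icc y1 y2
  · obtain ⟨j, hj, hjy⟩ := row
    obtain ⟨b, a, tall | square⟩ := avoids.swap.exists_subset_gridBlock_of_column_mem hγ hx hj hjy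
    · exact ⟨a, b, Or.inr (Or.inl (rect_subset_gridBlock_swap tall))⟩
    · exact ⟨a, b, Or.inr (Or.inr (rect_subset_gridBlock_swap square))⟩
  push Not at column row
  obtain ⟨a, hx1, hx2⟩ := exists_mul_le_and_le_of_forall_even_notMem_Icc hγ column
  obtain ⟨b, hy1, hy2⟩ := exists_mul_le_and_le_of_forall_even_notMem_Icc hγ row
  exact ⟨a, b, Or.inr (Or.inr (rect_subset_gridBlock hx1 hx2 hy1 hy2))⟩
end

section
/- For any three points p₁, p₂, p₃ in the unit square [0,1]², some pair among them has Euclidean distance at most √6 − √2. Moreover, the three points (0,0), (1, 2−√3), (2−√3, 1) lie in [0,1]² and each pair among them has Euclidean distance exactly √6 − √2. Consequently, the maximum over triples of points of [0,1]² of the minimum pairwise Euclidean distance equals √6 − √2, which is an irrational number. -/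
open Set

/-- The closed unit square `[0,1]²` in `ℝ²`. -/
def unitSquare : Set (ℝ × ℝ) := Set.Icc (0 : ℝ) 1 ×ˢ Set.Icc (0 : ℝ) 1

/-!
One of the three points is the median in the first coordinate and one is the median in the second.
If it is the same point, the angle there is not acute, so the two sides meeting at it have squares
summing to at most `2`, and one of them has length at most `1`. Otherwise the third point `c` is
extreme in both coordinates. If the other two points `u`, `v` are at distance at least `√(1 + t²)`
from `c`, then, a coordinate difference being at most `1`, each of them is at least `t` away from
`c` in the coordinate in which it is the median. So `u` and `v` differ by at most `1 - t` in each
coordinate, and their distance is at most `√2 (1 - t)`. The bounds `1 + t²` and `2 (1 - t)²` on the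
squared distances agree at `t = 2 - √3`.
-/

lemma mem_uIcc_or_mem_uIcc_or_mem_uIcc {α : Type*} [LinearOrder α] (a b c : α) :
    a ∈ uIcc b c ∨ b ∈ uIcc a c ∨ c ∈ uIcc a b := by
  grind [mem_uIcc]

lemma abs_sub_add_abs_sub_of_mem_uIcc {α : Type*} [AddCommGroup α] [LinearOrder α]
    [IsOrderedAddMonoid α] {x y z : α} (hy : y ∈ uIcc x z) : |x - y| + |y - z| = |x - z| := by
  rw [← sub_add_sub_cancel x y z, eq_comm, abs_add_eq_add_abs_iff]
  simp only [sub_nonneg, sub_nonpos]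
  exact (mem_uIcc.1 hy).symm.imp And.symm id

section OrderedRing

variable {R : Type*} [CommRing R] [LinearOrder R] [IsStrictOrderedRing R] {x y z t l : R}

lemma sub_sq_add_sub_sq_le_of_mem_uIcc (hy : y ∈ uIcc x z) :
    (x - y) ^ 2 + (y - z) ^ 2 ≤ (x - z) ^ 2 := by
  rw [← sq_abs (x - y), ← sq_abs (y - z), ← sq_abs (x - z), ← abs_sub_add_abs_sub_of_mem_uIcc hy]
  exact pow_add_pow_le (abs_nonneg _) (abs_nonneg _) two_ne_zero

lemma sub_sq_le_sub_sq_of_mem_uIcc (hy : y ∈ uIcc x z) (hxz : |x - z| ≤ l)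
    (ht : t ^ 2 ≤ (x - y) ^ 2) : (y - z) ^ 2 ≤ (l - t) ^ 2 := by
  have ht_abs : t ≤ |x - y| := (le_abs_self t).trans (sq_le_sq.1 ht)
  have hyz : |y - z| ≤ l - t := by linarith [abs_sub_add_abs_sub_of_mem_uIcc hy]
  exact sq_le_sq.2 (hyz.trans (le_abs_self _))

end OrderedRing

section Plane

variable {p q r c u v : ℝ × ℝ}

lemma d2_nonneg (p q : ℝ × ℝ) : 0 ≤ d2 p q := Real.sqrt_nonneg _

lemma d2_comm (p q : ℝ × ℝ) : d2 p q = d2 q p := by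
  rw [d2, d2, sub_sq_comm p.1, sub_sq_comm p.2]

lemma d2_sq (p q : ℝ × ℝ) : d2 p q ^ 2 = (p.1 - q.1) ^ 2 + (p.2 - q.2) ^ 2 :=
  Real.sq_sqrt (by positivity)

lemma d2_eq_of_sq_eq {d : ℝ} (hd : 0 ≤ d)
    (h : (p.1 - q.1) ^ 2 + (p.2 - q.2) ^ 2 = d ^ 2) : d2 p q = d := by
  rw [d2, h, Real.sqrt_sq hd]

lemma abs_fst_sub_le_one (hp : p ∈ unitSquare) (hq : q ∈ unitSquare) : |p.1 - q.1| ≤ 1 :=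
  Real.dist_le_of_mem_Icc_01 hp.1 hq.1

lemma abs_snd_sub_le_one (hp : p ∈ unitSquare) (hq : q ∈ unitSquare) : |p.2 - q.2| ≤ 1 :=
  Real.dist_le_of_mem_Icc_01 hp.2 hq.2

lemma d2_sq_le_two (hp : p ∈ unitSquare) (hq : q ∈ unitSquare) : d2 p q ^ 2 ≤ 2 := by
  rw [d2_sq]
  linarith [(sq_le_one_iff_abs_le_one _).2 (abs_fst_sub_le_one hp hq),
    (sq_le_one_iff_abs_le_one _).2 (abs_snd_sub_le_one hp hq)]

lemma d2_sq_add_d2_sq_le_of_mem_uIcc (hfst : q.1 ∈ uIcc p.1 r.1) (hsnd : q.2 ∈ uIcc p.2 r.2) :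
    d2 p q ^ 2 + d2 q r ^ 2 ≤ d2 p r ^ 2 := by
  simp only [d2_sq]
  linarith [sub_sq_add_sub_sq_le_of_mem_uIcc hfst, sub_sq_add_sub_sq_le_of_mem_uIcc hsnd]

lemma d2_sq_le_two_mul_one_sub_sq {t : ℝ} (hc : c ∈ unitSquare) (hu : u ∈ unitSquare)
    (hv : v ∈ unitSquare) (hfst : v.1 ∈ uIcc c.1 u.1) (hsnd : u.2 ∈ uIcc c.2 v.2)
    (hcu : 1 + t ^ 2 ≤ d2 c u ^ 2) (hcv : 1 + t ^ 2 ≤ d2 c v ^ 2) :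
    d2 u v ^ 2 ≤ 2 * (1 - t) ^ 2 := by
  have hcu_fst := abs_fst_sub_le_one hc hu
  have hcv_snd := abs_snd_sub_le_one hc hv
  rw [d2_sq] at hcu hcv
  have hcv_fst : t ^ 2 ≤ (c.1 - v.1) ^ 2 := by
    linarith [(sq_le_one_iff_abs_le_one _).2 hcv_snd]
  have hcu_snd : t ^ 2 ≤ (c.2 - u.2) ^ 2 := by
    linarith [(sq_le_one_iff_abs_le_one _).2 hcu_fst]
  rw [d2_sq, sub_sq_comm u.1]
  linarith [sub_sq_le_sub_sq_of_mem_uIcc hfst hcu_fst hcv_fst,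
    sub_sq_le_sub_sq_of_mem_uIcc hsnd hcv_snd hcu_snd]

/-- The separation of a triple of points of the plane: the least of the three pairwise distances. -/
noncomputable def tripleSep (p q r : ℝ × ℝ) : ℝ := min (min (d2 p q) (d2 p r)) (d2 q r)

lemma tripleSep_swap_left (p q r : ℝ × ℝ) : tripleSep q p r = tripleSep p q r := by
  rw [tripleSep, tripleSep, d2_comm q p, min_right_comm]

lemma tripleSep_swap_right (p q r : ℝ × ℝ) : tripleSep p r q = tripleSep p q r := by
  rw [tripleSep, tripleSep, d2_comm r q, min_comm (d2 p r)]

lemma tripleSep_sq (p q r : ℝ × ℝ) :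
    tripleSep p q r ^ 2 = min (min (d2 p q ^ 2) (d2 p r ^ 2)) (d2 q r ^ 2) := by
  have sq_min {a b : ℝ} (ha : 0 ≤ a) (hb : 0 ≤ b) : min a b ^ 2 = min (a ^ 2) (b ^ 2) :=
    (pow_left_monotoneOn (n := 2)).map_min ha hb
  rw [tripleSep, sq_min (le_min (d2_nonneg _ _) (d2_nonneg _ _)) (d2_nonneg _ _),
    sq_min (d2_nonneg _ _) (d2_nonneg _ _)]

lemma tripleSep_sq_le_one_of_mem_uIcc (hp : p ∈ unitSquare) (hr : r ∈ unitSquare)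
    (hfst : q.1 ∈ uIcc p.1 r.1) (hsnd : q.2 ∈ uIcc p.2 r.2) : tripleSep p q r ^ 2 ≤ 1 := by
  have hsum : d2 p q ^ 2 + d2 q r ^ 2 ≤ 2 :=
    (d2_sq_add_d2_sq_le_of_mem_uIcc hfst hsnd).trans (d2_sq_le_two hp hr)
  rw [tripleSep_sq]
  by_contra! hlt
  simp only [lt_min_iff] at hlt
  linarith

lemma tripleSep_sq_le_max_of_fst_mem_uIcc_of_snd_mem_uIcc (hc : c ∈ unitSquare)
    (hu : u ∈ unitSquare) (hv : v ∈ unitSquare) (hfst : v.1 ∈ uIcc c.1 u.1)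
    (hsnd : u.2 ∈ uIcc c.2 v.2) (t : ℝ) :
    tripleSep c u v ^ 2 ≤ max (1 + t ^ 2) (2 * (1 - t) ^ 2) := by
  rw [tripleSep_sq]
  by_contra! hlt
  simp only [max_lt_iff, lt_min_iff] at hlt
  obtain ⟨⟨⟨hcu, -⟩, hcv, -⟩, -, huv⟩ := hlt
  exact huv.not_ge (d2_sq_le_two_mul_one_sub_sq hc hu hv hfst hsnd hcu.le hcv.le)

lemma tripleSep_sq_le_max_of_fst_mem_uIcc (hp : p ∈ unitSquare) (hq : q ∈ unitSquare)
    (hr : r ∈ unitSquare) (hfst : q.1 ∈ uIcc p.1 r.1) (t : ℝ) :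
    tripleSep p q r ^ 2 ≤ max (1 + t ^ 2) (2 * (1 - t) ^ 2) := by
  rcases mem_uIcc_or_mem_uIcc_or_mem_uIcc p.2 q.2 r.2 with hsnd | hsnd | hsnd
  · rw [← tripleSep_swap_right, ← tripleSep_swap_left]
    rw [uIcc_comm] at hfst hsnd
    exact tripleSep_sq_le_max_of_fst_mem_uIcc_of_snd_mem_uIcc hr hp hq hfst hsnd t
  · calc tripleSep p q r ^ 2 ≤ 1 := tripleSep_sq_le_one_of_mem_uIcc hp hr hfst hsnd
      _ ≤ 1 + t ^ 2 := le_add_of_nonneg_right (sq_nonneg t)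
      _ ≤ max (1 + t ^ 2) (2 * (1 - t) ^ 2) := le_max_left _ _
  · rw [← tripleSep_swap_right]
    exact tripleSep_sq_le_max_of_fst_mem_uIcc_of_snd_mem_uIcc hp hr hq hfst hsnd t

lemma tripleSep_sq_le_max (hp : p ∈ unitSquare) (hq : q ∈ unitSquare) (hr : r ∈ unitSquare)
    (t : ℝ) : tripleSep p q r ^ 2 ≤ max (1 + t ^ 2) (2 * (1 - t) ^ 2) := by
  rcases mem_uIcc_or_mem_uIcc_or_mem_uIcc p.1 q.1 r.1 with hfst | hfst | hfst
  · rw [← tripleSep_swap_left]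
    exact tripleSep_sq_le_max_of_fst_mem_uIcc hq hp hr hfst t
  · exact tripleSep_sq_le_max_of_fst_mem_uIcc hp hq hr hfst t
  · rw [← tripleSep_swap_right]
    exact tripleSep_sq_le_max_of_fst_mem_uIcc hp hr hq hfst t

end Plane

lemma two_sub_sqrt_three_mem_Icc : 2 - √3 ∈ Icc (0 : ℝ) 1 := by
  have h_le : √3 ≤ 2 := Real.sqrt_le_iff.2 (by norm_num)
  have h_ge : 1 ≤ √3 := Real.one_le_sqrt.2 (by norm_num)
  constructor <;> linarith

lemma sqrt_six_sub_sqrt_two_nonneg : 0 ≤ √6 - √2 :=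
  sub_nonneg.2 (Real.sqrt_le_sqrt (by norm_num))

lemma sqrt_six_sub_sqrt_two_sq : (√6 - √2) ^ 2 = 8 - 4 * √3 := by
  have h_six : √6 = √2 * √3 := by
    rw [← Real.sqrt_mul zero_le_two]
    norm_num
  calc (√6 - √2) ^ 2 = √2 ^ 2 * (√3 ^ 2 - 2 * √3 + 1) := by rw [h_six]; ring
    _ = 8 - 4 * √3 := by rw [Real.sq_sqrt zero_le_two, Real.sq_sqrt zero_le_three]; ring

lemma one_add_two_sub_sqrt_three_sq : 1 + (2 - √3) ^ 2 = (√6 - √2) ^ 2 := by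
  rw [sqrt_six_sub_sqrt_two_sq]
  linarith [Real.sq_sqrt (zero_le_three (α := ℝ))]

lemma two_mul_one_sub_two_sub_sqrt_three_sq : 2 * (1 - (2 - √3)) ^ 2 = (√6 - √2) ^ 2 := by
  rw [sqrt_six_sub_sqrt_two_sq]
  linarith [Real.sq_sqrt (zero_le_three (α := ℝ))]

lemma irrational_sqrt_six_sub_sqrt_two : Irrational (√6 - √2) := by
  refine Irrational.of_pow 2 ?_
  rw [sqrt_six_sub_sqrt_two_sq]
  have h_three : Irrational √3 := by norm_num
  exact_mod_cast (h_three.natCast_mul four_ne_zero).natCast_sub 8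

lemma tripleSep_le_sqrt_six_sub_sqrt_two {p q r : ℝ × ℝ} (hp : p ∈ unitSquare)
    (hq : q ∈ unitSquare) (hr : r ∈ unitSquare) : tripleSep p q r ≤ √6 - √2 := by
  have h_sq := tripleSep_sq_le_max hp hq hr (2 - √3)
  rw [one_add_two_sub_sqrt_three_sq, two_mul_one_sub_two_sub_sqrt_three_sq, max_self] at h_sq
  exact le_of_sq_le_sq h_sq sqrt_six_sub_sqrt_two_nonneg

theorem stmt12 :
    (∀ p₁ p₂ p₃ : ℝ × ℝ, p₁ ∈ unitSquare → p₂ ∈ unitSquare → p₃ ∈ unitSquare →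
      d2 p₁ p₂ ≤ Real.sqrt 6 - Real.sqrt 2 ∨
      d2 p₁ p₃ ≤ Real.sqrt 6 - Real.sqrt 2 ∨
      d2 p₂ p₃ ≤ Real.sqrt 6 - Real.sqrt 2) ∧
    (((0 : ℝ), (0 : ℝ)) ∈ unitSquare ∧
      ((1 : ℝ), 2 - Real.sqrt 3) ∈ unitSquare ∧
      ((2 - Real.sqrt 3, (1 : ℝ))) ∈ unitSquare ∧
      d2 (0, 0) (1, 2 - Real.sqrt 3) = Real.sqrt 6 - Real.sqrt 2 ∧
      d2 (0, 0) (2 - Real.sqrt 3, 1) = Real.sqrt 6 - Real.sqrt 2 ∧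
      d2 (1, 2 - Real.sqrt 3) (2 - Real.sqrt 3, 1) = Real.sqrt 6 - Real.sqrt 2) ∧
    IsGreatest {v : ℝ | ∃ p₁ p₂ p₃ : ℝ × ℝ, p₁ ∈ unitSquare ∧ p₂ ∈ unitSquare ∧
        p₃ ∈ unitSquare ∧ v = min (min (d2 p₁ p₂) (d2 p₁ p₃)) (d2 p₂ p₃)}
      (Real.sqrt 6 - Real.sqrt 2) ∧
    Irrational (Real.sqrt 6 - Real.sqrt 2) := by
  have h₀ : ((0 : ℝ), (0 : ℝ)) ∈ unitSquare := ⟨unitInterval.zero_mem, unitInterval.zero_mem⟩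
  have h₁ : ((1 : ℝ), 2 - √3) ∈ unitSquare := ⟨unitInterval.one_mem, two_sub_sqrt_three_mem_Icc⟩
  have h₂ : (2 - √3, (1 : ℝ)) ∈ unitSquare := ⟨two_sub_sqrt_three_mem_Icc, unitInterval.one_mem⟩
  have d₀₁ : d2 (0, 0) (1, 2 - √3) = √6 - √2 :=
    d2_eq_of_sq_eq sqrt_six_sub_sqrt_two_nonneg (by linarith [one_add_two_sub_sqrt_three_sq])
  have d₀₂ : d2 (0, 0) (2 - √3, 1) = √6 - √2 :=
    d2_eq_of_sq_eq sqrt_six_sub_sqrt_two_nonneg (by linarith [one_add_two_sub_sqrt_three_sq])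
  have d₁₂ : d2 (1, 2 - √3) (2 - √3, 1) = √6 - √2 :=
    d2_eq_of_sq_eq sqrt_six_sub_sqrt_two_nonneg
      (by linarith [two_mul_one_sub_two_sub_sqrt_three_sq])
  refine ⟨fun p₁ p₂ p₃ hp₁ hp₂ hp₃ => ?_, ⟨h₀, h₁, h₂, d₀₁, d₀₂, d₁₂⟩,
    ⟨⟨_, _, _, h₀, h₁, h₂, ?_⟩, ?_⟩, irrational_sqrt_six_sub_sqrt_two⟩
  · simpa only [tripleSep, min_le_iff, or_assoc] using
      tripleSep_le_sqrt_six_sub_sqrt_two hp₁ hp₂ hp₃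
  · rw [d₀₁, d₀₂, d₁₂, min_self, min_self]
  · rintro _ ⟨p₁, p₂, p₃, hp₁, hp₂, hp₃, rfl⟩
    exact tripleSep_le_sqrt_six_sub_sqrt_two hp₁ hp₂ hp₃
end
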